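/- Fix real numbers q > 0 and r > 0, and set P₁₂(n) = √(1 + q/(π²n^{2+r})) − 1 and P₂₂(n) = √((q/nʳ + 2P₁₂(n))/(n²π²)). Then there exists an integer N such that for all n ≥ N the discriminant of the n-th closed-loop characteristic polynomial is negative: (n²π²P₂₂(n))² < 4(n²π² + P₁₂(n)). Consequently, for all n ≥ N the two closed-loop eigenvalues μₙ, μ₋ₙ of the n-th mode are a non-real complex-conjugate pair with real part −n²π²P₂₂(n)/2 < 0. -/

import Mathlib

/-- `P₁₂(n)` in the Dirichlet boundary control example. -/
noncomputable def dirP12 (q r : ℝ) (n : ℕ) : ℝ :=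
  Real.sqrt (1 + q / (Real.pi ^ 2 * (n : ℝ) ^ ((2 : ℝ) + r))) - 1

/-- `P₂₂(n)` in the Dirichlet boundary control example. -/
noncomputable def dirP22 (q r : ℝ) (n : ℕ) : ℝ :=
  Real.sqrt ((q / (n : ℝ) ^ r + 2 * dirP12 q r n) / ((n : ℝ) ^ 2 * Real.pi ^ 2))

/-!
With `A = n²π²`, the definition of `P₂₂` gives `(A P₂₂)² = A (q/nʳ + 2P₁₂)`. Both `q/nʳ` and
`P₁₂(n)` tend to `0`, so eventually `q/nʳ + 2P₁₂ < 4` and hence `(A P₂₂)² < 4A < 4(A + P₁₂)`.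
A real quadratic with negative discriminant has no real root, and the imaginary part of the
equation then determines the real part of each root.
-/

section Quadratic

variable {a b c : ℝ} {z : ℂ}

theorem im_ne_zero_of_quadratic_eq_zero_of_discrim_neg (hd : discrim a b c < 0)
    (hz : (a : ℂ) * z ^ 2 + b * z + c = 0) : z.im ≠ 0 := by
  intro him
  have hzre : z = (z.re : ℂ) := Complex.ext rfl him
  have hroot : a * (z.re * z.re) + b * z.re + c = 0 := by
    rw [hzre, sq] at hz
    exact_mod_cast hz
  have hsq := discrim_eq_sq_of_quadratic_eq_zero hroot
  exact (hsq ▸ hd).not_ge (sq_nonneg _)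

theorem re_eq_of_quadratic_eq_zero_of_discrim_neg (hd : discrim a b c < 0)
    (hz : (a : ℂ) * z ^ 2 + b * z + c = 0) : z.re = -b / (2 * a) := by
  have ha : a ≠ 0 := by
    rintro rfl
    exact hd.not_ge (by simpa [discrim] using sq_nonneg b)
  have him : z.im * (2 * a * z.re + b) = 0 := by
    have him' := congrArg Complex.im hz
    simp only [sq, Complex.add_im, Complex.mul_im, Complex.ofReal_re, Complex.ofReal_im,
      Complex.zero_im] at him'
    linear_combination him'
  have hre : 2 * a * z.re + b = 0 :=
    (mul_eq_zero.mp him).resolve_left (im_ne_zero_of_quadratic_eq_zero_of_discrim_neg hd hz)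
  rw [eq_div_iff (by positivity)]
  linear_combination hre

theorem quadratic_conj_eq_zero (hz : (a : ℂ) * z ^ 2 + b * z + c = 0) :
    (a : ℂ) * starRingEnd ℂ z ^ 2 + b * starRingEnd ℂ z + c = 0 := by
  simpa using congrArg (starRingEnd ℂ) hz

end Quadratic

section DirichletExample

open Filter Topology Real

variable {q r : ℝ} {n : ℕ}

theorem tendsto_const_div_natCast_rpow_atTop (q : ℝ) (hr : 0 < r) :
    Tendsto (fun n : ℕ => q / (n : ℝ) ^ r) atTop (𝓝 0) :=
  tendsto_const_nhds.div_atTop ((tendsto_rpow_atTop hr).comp tendsto_natCast_atTop_atTop)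

theorem tendsto_dirP12 (q : ℝ) (hr : -2 < r) : Tendsto (dirP12 q r) atTop (𝓝 0) := by
  have hlim := tendsto_const_div_natCast_rpow_atTop (q / π ^ 2) (by linarith : 0 < 2 + r)
  unfold dirP12
  simpa only [div_div, add_zero, sqrt_one, sub_self] using
    (hlim.const_add 1).sqrt.sub_const 1

theorem eventually_div_rpow_add_two_mul_dirP12_lt_four (q : ℝ) (hr : 0 < r) :
    ∀ᶠ n : ℕ in atTop, q / (n : ℝ) ^ r + 2 * dirP12 q r n < 4 := by
  have hlim := (tendsto_const_div_natCast_rpow_atTop q hr).add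
    ((tendsto_dirP12 q (by linarith)).const_mul 2)
  exact hlim.eventually_lt_const (by norm_num)

theorem dirP12_pos (hq : 0 < q) (hn : 0 < n) : 0 < dirP12 q r n := by
  rw [dirP12, sub_pos, lt_sqrt zero_le_one, one_pow, lt_add_iff_pos_right]
  positivity

theorem div_rpow_add_two_mul_dirP12_pos (hq : 0 < q) (hn : 0 < n) :
    0 < q / (n : ℝ) ^ r + 2 * dirP12 q r n := by
  have := dirP12_pos (r := r) hq hn
  positivity

theorem dirP22_pos (hq : 0 < q) (hn : 0 < n) : 0 < dirP22 q r n :=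
  sqrt_pos.mpr (div_pos (div_rpow_add_two_mul_dirP12_pos hq hn) (by positivity))

theorem mul_dirP22_sq (hq : 0 < q) (hn : 0 < n) :
    ((n : ℝ) ^ 2 * π ^ 2 * dirP22 q r n) ^ 2 =
      (n : ℝ) ^ 2 * π ^ 2 * (q / (n : ℝ) ^ r + 2 * dirP12 q r n) := by
  have hX := div_rpow_add_two_mul_dirP12_pos (r := r) hq hn
  rw [mul_pow, dirP22, sq_sqrt (by positivity)]
  field_simp

theorem mul_dirP22_sq_lt (hq : 0 < q) (hn : 0 < n)
    (h : q / (n : ℝ) ^ r + 2 * dirP12 q r n < 4) :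
    ((n : ℝ) ^ 2 * π ^ 2 * dirP22 q r n) ^ 2 < 4 * ((n : ℝ) ^ 2 * π ^ 2 + dirP12 q r n) :=
  calc ((n : ℝ) ^ 2 * π ^ 2 * dirP22 q r n) ^ 2
      = (n : ℝ) ^ 2 * π ^ 2 * (q / (n : ℝ) ^ r + 2 * dirP12 q r n) := mul_dirP22_sq hq hn
    _ < (n : ℝ) ^ 2 * π ^ 2 * 4 := by gcongr
    _ < 4 * ((n : ℝ) ^ 2 * π ^ 2 + dirP12 q r n) := by linarith [dirP12_pos (r := r) hq hn]

end DirichletExample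

/-- In the Dirichlet example, for all large enough `n` the
discriminant of the closed-loop characteristic polynomial
`μ² + n²π²P₂₂(n) μ + (n²π² + P₁₂(n))` is negative, so its two roots form a
non-real complex-conjugate pair with (negative) real part `−n²π²P₂₂(n)/2`. -/
theorem dirichlet_example_high_modes_complex (q r : ℝ) (hq : 0 < q) (hr : 0 < r) :
    ∃ N : ℕ, 1 ≤ N ∧ ∀ n : ℕ, N ≤ n →
      ((n : ℝ) ^ 2 * Real.pi ^ 2 * dirP22 q r n) ^ 2 <
        4 * ((n : ℝ) ^ 2 * Real.pi ^ 2 + dirP12 q r n) ∧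
      ∀ μ : ℂ,
        μ ^ 2 + (((n : ℝ) ^ 2 * Real.pi ^ 2 * dirP22 q r n : ℝ) : ℂ) * μ +
            (((n : ℝ) ^ 2 * Real.pi ^ 2 + dirP12 q r n : ℝ) : ℂ) = 0 →
          μ.re = -((n : ℝ) ^ 2 * Real.pi ^ 2 * dirP22 q r n) / 2 ∧
          μ.re < 0 ∧ μ.im ≠ 0 ∧
          (starRingEnd ℂ μ) ^ 2 +
              (((n : ℝ) ^ 2 * Real.pi ^ 2 * dirP22 q r n : ℝ) : ℂ) * (starRingEnd ℂ μ) +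
              (((n : ℝ) ^ 2 * Real.pi ^ 2 + dirP12 q r n : ℝ) : ℂ) = 0 := by
  obtain ⟨N, hN⟩ := Filter.eventually_atTop.mp
    ((eventually_div_rpow_add_two_mul_dirP12_lt_four q hr).and (Filter.eventually_ge_atTop 1))
  refine ⟨N, (hN N le_rfl).2, fun n hNn => ?_⟩
  obtain ⟨hlt, hn⟩ := hN n hNn
  have hdisc := mul_dirP22_sq_lt hq hn hlt
  have hdamp : 0 < (n : ℝ) ^ 2 * Real.pi ^ 2 * dirP22 q r n :=
    mul_pos (by positivity) (dirP22_pos hq hn)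
  refine ⟨hdisc, fun μ hμ => ?_⟩
  have hd : discrim 1 ((n : ℝ) ^ 2 * Real.pi ^ 2 * dirP22 q r n)
      ((n : ℝ) ^ 2 * Real.pi ^ 2 + dirP12 q r n) < 0 := by
    rw [discrim]
    linarith
  rw [← one_mul (μ ^ 2), ← Complex.ofReal_one] at hμ
  have hre := re_eq_of_quadratic_eq_zero_of_discrim_neg hd hμ
  rw [mul_one] at hre
  refine ⟨hre, by linarith, im_ne_zero_of_quadratic_eq_zero_of_discrim_neg hd hμ, ?_⟩
  simpa only [Complex.ofReal_one, one_mul] using quadratic_conj_eq_zero hμ
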